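/- Let (E,‖·‖) be an n-dimensional real normed space with n ≥ 3, let μ_F be the Haar (Lebesgue) measure on E normalized so that μ_F of the unit ball equals ω_n, and let x₀ ∈ E. Then for every λ > 0 the extremal identity holds: (∫_E (λ+‖x-x₀‖^{2-ap})^{(2-n)p/(2-ap)}·‖x-x₀‖^{-ap} dμ_F(x))^{2/p} = K_a²·(n-2)²·∫_E (λ+‖x-x₀‖^{2-ap})^{2(ap-n)/(2-ap)}·‖x-x₀‖^{2-2ap} dμ_F(x); that is, the functions u_λ(x) = (λ+‖x-x₀‖^{2-ap})^{(2-n)/(2-ap)} achieve equality in the sharp Caffarelli-Kohn-Nirenberg inequality on the Minkowski space (E,‖·‖,μ_F). -/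

import Mathlib

/-!
The identity is an explicit computation. Put `s = 2 - ap` and `m = (n - ap)/s = n/(2(1 - a)) > 1`;
both exponents of `λ + ‖x - x₀‖^s` equal `-2m`. Both integrands are radial about `x₀`, so polar
coordinates for Haar measure (valid for any norm, the unit ball having volume `ω_n`) followed by
`t = r^s` reduce the integrals to Beta integrals over `(0, ∞)`
(`integral_rpow_mul_add_rpow_neg`, `integral_radial`):
the left one is `(n ω_n / s) λ^{-m} B(m, m)`, the right one `(n ω_n / s) λ^{1-m} B(m+1, m-1)`.

Since `B(m+1, m-1) = m/(m-1) · B(m, m)`, `2/p = 1 - 1/m` and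
`K_a² (n-2)² = ((m-1)/m) · (n ω_n B(m, m) / s)^{-1/m}`, both sides are equal to
`λ^{1-m} (n ω_n B(m, m) / s)^{1 - 1/m}`.
-/

open MeasureTheory Filter Topology Metric

/-- Volume of the unit ball in `ℝ^n`. -/
noncomputable def omegaBall (n : ℕ) : ℝ :=
  Real.pi ^ ((n : ℝ) / 2) / Real.Gamma ((n : ℝ) / 2 + 1)

/-- The sharp Caffarelli-Kohn-Nirenberg constant `K_a` (for `p = 2n/(n-2+2a)`). -/
noncomputable def CKNconst (n : ℕ) (a p : ℝ) : ℝ :=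
  (1 / (((n : ℝ) - 2) * ((n : ℝ) - a * p))) ^ ((1 : ℝ) / 2) *
    ((2 - a * p) * Real.Gamma ((2 * (n : ℝ) - 2 * a * p) / (2 - a * p)) /
        ((n : ℝ) * omegaBall n * Real.Gamma (((n : ℝ) - a * p) / (2 - a * p)) ^ 2)) ^
      ((2 - a * p) / (2 * (n : ℝ) - 2 * a * p))

open ProbabilityTheory in
theorem integral_Ioo_eq_beta {u v : ℝ} (hu : 0 < u) (hv : 0 < v) :
    ∫ x in Set.Ioo (0 : ℝ) 1, x ^ (u - 1) * (1 - x) ^ (v - 1) = beta u v := by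
  have h : Complex.betaIntegral u v
      = ((∫ x in Set.Ioo (0 : ℝ) 1, x ^ (u - 1) * (1 - x) ^ (v - 1) : ℝ) : ℂ) := by
    rw [Complex.betaIntegral, intervalIntegral.integral_of_le zero_le_one,
      integral_Ioc_eq_integral_Ioo, ← integral_complex_ofReal]
    refine setIntegral_congr_fun measurableSet_Ioo fun x hx => ?_
    have h1 : (0 : ℝ) ≤ 1 - x := by linarith [hx.2]
    simp only [Complex.ofReal_mul, Complex.ofReal_cpow hx.1.le, Complex.ofReal_cpow h1,
      Complex.ofReal_sub, Complex.ofReal_one]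
  rw [beta_eq_betaIntegralReal u v hu hv, h, Complex.ofReal_re]

theorem image_div_add_Ioi {l : ℝ} (hl : 0 < l) :
    (fun t : ℝ => t / (l + t)) '' Set.Ioi 0 = Set.Ioo 0 1 := by
  ext y
  constructor
  · rintro ⟨t, ht, rfl⟩
    have ht : 0 < t := ht
    refine ⟨by positivity, ?_⟩
    rw [div_lt_one (by positivity)]
    linarith
  · rintro ⟨h0, h1⟩
    have h1' : 0 < 1 - y := by linarith
    refine ⟨l * y / (1 - y), Set.mem_Ioi.2 (by positivity), ?_⟩
    have : 1 - y ≠ 0 := h1'.ne'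
    have : l + l * y / (1 - y) = l / (1 - y) := by field_simp; ring
    simp only [this]
    field_simp

open ProbabilityTheory in
/-- The Beta integral over the half-line; it comes from the one over `(0, 1)` by the substitution
`x = t / (l + t)`. -/
theorem integral_rpow_mul_add_rpow_neg {l u v : ℝ} (hl : 0 < l) (hu : 0 < u) (hv : 0 < v) :
    ∫ t in Set.Ioi (0 : ℝ), t ^ (u - 1) * (l + t) ^ (-(u + v)) = l ^ (-v) * beta u v := by
  have hd : ∀ t ∈ Set.Ioi (0 : ℝ), HasDerivWithinAt (fun t : ℝ => t / (l + t))
      (l / (l + t) ^ 2) (Set.Ioi 0) t := by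
    intro t ht
    have ht : 0 < t := ht
    have h := ((hasDerivAt_id t).div ((hasDerivAt_id t).const_add l)
      (by simp only [id]; positivity)).hasDerivWithinAt (s := Set.Ioi 0)
    refine h.congr_deriv ?_
    simp only [id]
    congr 1
    ring
  have hinj : Set.InjOn (fun t : ℝ => t / (l + t)) (Set.Ioi 0) := by
    intro t ht r hr h
    have ht : 0 < t := ht
    have hr : 0 < r := hr
    simp only at h
    rw [div_eq_div_iff (by positivity) (by positivity)] at h
    have : l * (t - r) = 0 := by linarith
    rcases mul_eq_zero.1 this with h | h <;> linarith
  have key := integral_image_eq_integral_abs_deriv_smul measurableSet_Ioi hd hinj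
    (fun x : ℝ => x ^ (u - 1) * (1 - x) ^ (v - 1))
  rw [image_div_add_Ioi hl, integral_Ioo_eq_beta hu hv] at key
  rw [key, ← integral_const_mul]
  refine setIntegral_congr_fun measurableSet_Ioi fun t ht => ?_
  have ht : 0 < t := ht
  have hlt : 0 < l + t := by positivity
  have h1 : 1 - t / (l + t) = l / (l + t) := by field_simp; ring
  simp only [smul_eq_mul, h1]
  rw [abs_of_pos (by positivity), Real.div_rpow ht.le hlt.le, Real.div_rpow hl.le hlt.le]
  have e1 : (l + t) ^ (-(u + v))
      = ((l + t) ^ (2 : ℕ) * (l + t) ^ (u - 1) * (l + t) ^ (v - 1))⁻¹ := by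
    rw [← Real.rpow_natCast, ← Real.rpow_add hlt, ← Real.rpow_add hlt, ← Real.rpow_neg hlt.le]
    congr 1; push_cast; ring
  have e2 : l ^ (-v) * (l * l ^ (v - 1)) = 1 := by
    rw [Real.rpow_sub_one hl.ne', mul_div_cancel₀ _ hl.ne', ← Real.rpow_add hl]
    simp
  rw [e1]
  calc _ = (l ^ (-v) * (l * l ^ (v - 1))) * (t ^ (u - 1) *
        ((l + t) ^ (2 : ℕ) * (l + t) ^ (u - 1) * (l + t) ^ (v - 1))⁻¹) := by rw [e2, one_mul]
    _ = _ := by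
        have a1 := (Real.rpow_pos_of_pos hlt (u - 1)).ne'
        have a2 := (Real.rpow_pos_of_pos hlt (v - 1)).ne'
        field_simp

open ProbabilityTheory in
/-- Polar coordinates about `x₀` followed by the substitution `t = r ^ s`. -/
theorem integral_radial {E : Type*} [NormedAddCommGroup E] [NormedSpace ℝ E]
    [MeasurableSpace E] [BorelSpace E] [FiniteDimensional ℝ E]
    {n : ℕ} (hn : 0 < n) (hdim : Module.finrank ℝ E = n)
    (μ : Measure E) [μ.IsAddHaarMeasure] (x₀ : E)
    {l s q u v : ℝ} (hl : 0 < l) (hs : 0 < s) (hu : 0 < u) (hv : 0 < v) (hq : q + n = s * u) :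
    ∫ x, (l + ‖x - x₀‖ ^ s) ^ (-(u + v)) * ‖x - x₀‖ ^ q ∂μ
      = n * μ.real (ball 0 1) / s * (l ^ (-v) * beta u v) := by
  have : Nontrivial E := Module.nontrivial_of_finrank_pos (R := ℝ) (by omega)
  rw [integral_sub_right_eq_self (fun x => (l + ‖x‖ ^ s) ^ (-(u + v)) * ‖x‖ ^ q) x₀,
    integral_fun_norm_addHaar μ (fun r => (l + r ^ s) ^ (-(u + v)) * r ^ q), hdim,
    ← integral_rpow_mul_add_rpow_neg hl hu hv,
    ← integral_comp_rpow_Ioi_of_pos (g := fun t => t ^ (u - 1) * (l + t) ^ (-(u + v))) hs]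
  have : ∫ y in Set.Ioi (0 : ℝ), y ^ (n - 1) • ((l + y ^ s) ^ (-(u + v)) * y ^ q)
      = s⁻¹ * ∫ x in Set.Ioi (0 : ℝ),
        (s * x ^ (s - 1)) • ((x ^ s) ^ (u - 1) * (l + x ^ s) ^ (-(u + v))) := by
    rw [← integral_const_mul]
    refine setIntegral_congr_fun measurableSet_Ioi fun y hy => ?_
    have hy : 0 < y := hy
    have e : y ^ (n - 1) * y ^ q = y ^ (s - 1) * (y ^ s) ^ (u - 1) := by
      rw [← Real.rpow_natCast, ← Real.rpow_mul hy.le, ← Real.rpow_add hy, ← Real.rpow_add hy]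
      congr 1
      rw [Nat.cast_sub hn]
      push_cast
      linarith
    simp only [smul_eq_mul]
    calc _ = (y ^ (n - 1) * y ^ q) * (l + y ^ s) ^ (-(u + v)) := by ring
      _ = _ := by rw [e]; field_simp
  rw [this]
  simp only [smul_eq_mul, nsmul_eq_mul]
  ring

open ProbabilityTheory in
theorem beta_add_one_sub_one {m : ℝ} (hm : 1 < m) :
    beta (m + 1) (m - 1) = m / (m - 1) * beta m m := by
  have h1 : m - 1 ≠ 0 := by linarith
  have h2 := Real.Gamma_add_one h1
  rw [sub_add_cancel] at h2
  rw [beta, beta, Real.Gamma_add_one (by linarith : m ≠ 0), h2,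
    show m + 1 + (m - 1) = m + m by ring]
  field_simp

theorem omegaBall_pos (n : ℕ) : 0 < omegaBall n :=
  div_pos (Real.rpow_pos_of_pos Real.pi_pos _) (Real.Gamma_pos_of_pos (by positivity))

/-- the functions `u_λ(x) = (λ + ‖x-x₀‖^{2-ap})^{(2-n)/(2-ap)}` achieve
equality in the sharp Caffarelli-Kohn-Nirenberg inequality on a Minkowski space with
normalized Haar measure. -/
theorem minkowski_extremal_identity {E : Type*} [NormedAddCommGroup E] [NormedSpace ℝ E]
    [MeasurableSpace E] [BorelSpace E] [FiniteDimensional ℝ E]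
    (n : ℕ) (hn : 3 ≤ n) (hdim : Module.finrank ℝ E = n)
    (a p : ℝ) (ha0 : 0 ≤ a) (ha1 : a < 1) (hp : p = 2 * n / (n - 2 + 2 * a))
    (μ : Measure E) [μ.IsAddHaarMeasure]
    (hμ : μ (ball (0 : E) 1) = ENNReal.ofReal (omegaBall n))
    (x₀ : E) (lam : ℝ) (hlam : 0 < lam) :
    (∫ x, (lam + ‖x - x₀‖ ^ (2 - a * p)) ^ ((2 - (n : ℝ)) * p / (2 - a * p)) *
        ‖x - x₀‖ ^ (-(a * p)) ∂μ) ^ (2 / p)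
      = CKNconst n a p ^ 2 * ((n : ℝ) - 2) ^ 2 *
        ∫ x, (lam + ‖x - x₀‖ ^ (2 - a * p)) ^ (2 * (a * p - (n : ℝ)) / (2 - a * p)) *
          ‖x - x₀‖ ^ (2 - 2 * a * p) ∂μ := by
  -- The exponents and `K_a` are expressed through `s = 2 - ap` and `m = (n - ap) / s`.
  have hnR : (3 : ℝ) ≤ n := by exact_mod_cast hn
  have hD : 0 < (n : ℝ) - 2 + 2 * a := by linarith
  have hn2 : 0 < (n : ℝ) - 2 := by linarith
  have h1a : 0 < 1 - a := by linarith
  obtain ⟨s, hs⟩ : ∃ s, s = 2 - a * p := ⟨_, rfl⟩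
  obtain ⟨m, hm⟩ : ∃ m, m = (n : ℝ) / (2 * (1 - a)) := ⟨_, rfl⟩
  have hs' : s = 2 * (n - 2) * (1 - a) / (n - 2 + 2 * a) := by
    rw [hs, hp]; field_simp; ring
  have hs0 : 0 < s := by rw [hs']; positivity
  have hm1 : 1 < m := by
    rw [hm, lt_div_iff₀ (by positivity)]; linarith
  have hm0 : 0 < m := by linarith
  have hsm : s * m = n - a * p := by
    rw [hs', hm, hp]; field_simp; ring
  have hnp : (n - 2 : ℝ) * p = s * (2 * m) := by
    rw [hs', hm, hp]; field_simp
  have hp2 : 2 / p = 1 - 1 / m := by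
    rw [hm, hp]; field_simp; ring
  have hfrac : (n - 2 : ℝ) / (n - a * p) = (m - 1) / m := by
    rw [← hsm, hs', hm]; field_simp; ring
  have x1 : (2 - (n : ℝ)) * p / (2 - a * p) = -(m + m) := by
    rw [← hs, div_eq_iff hs0.ne']; linarith
  have x2 : 2 * (a * p - (n : ℝ)) / (2 - a * p) = -((m + 1) + (m - 1)) := by
    rw [← hs, div_eq_iff hs0.ne']; linarith
  have x3 : (2 * (n : ℝ) - 2 * a * p) / (2 - a * p) = m + m := by
    rw [← hs, div_eq_iff hs0.ne']; linarith
  have x4 : ((n : ℝ) - a * p) / (2 - a * p) = m := by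
    rw [← hs, div_eq_iff hs0.ne']; linarith
  have x5 : (2 - a * p) / (2 * (n : ℝ) - 2 * a * p) = 1 / m / 2 := by
    rw [← hs, show 2 * (n : ℝ) - 2 * a * p = 2 * (s * m) by rw [hsm]; ring]
    field_simp
  have hω := omegaBall_pos n
  have hball : μ.real (ball 0 1) = omegaBall n := by
    rw [Measure.real, hμ, ENNReal.toReal_ofReal hω.le]
  have hB := ProbabilityTheory.beta_pos hm0 hm0
  have hK : CKNconst n a p ^ 2 * ((n : ℝ) - 2) ^ 2
      = (m - 1) / m * (n * omegaBall n / s * ProbabilityTheory.beta m m) ^ (-(1 / m)) := by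
    have hnap : 0 < (n : ℝ) - a * p := by rw [← hsm]; positivity
    rw [CKNconst, x3, x4, x5, ← hs]
    have e1 : s * Real.Gamma (m + m) / (n * omegaBall n * Real.Gamma m ^ 2)
        = (n * omegaBall n / s * ProbabilityTheory.beta m m)⁻¹ := by
      rw [ProbabilityTheory.beta]
      have := (Real.Gamma_pos_of_pos hm0).ne'
      have := (Real.Gamma_pos_of_pos (add_pos hm0 hm0)).ne'
      field_simp
    have hX : 0 < n * omegaBall n / s * ProbabilityTheory.beta m m := by positivity
    rw [e1, mul_pow, ← Real.rpow_mul_natCast (by positivity),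
      ← Real.rpow_mul_natCast (by positivity), Real.inv_rpow hX.le, ← Real.rpow_neg hX.le,
      ← hfrac]
    have e2 : (1 / 2 : ℝ) * (2 : ℕ) = 1 := by norm_num
    have e3 : -(1 / m / 2 * ((2 : ℕ) : ℝ)) = -(1 / m) := by push_cast; ring
    rw [e2, e3, Real.rpow_one]
    field_simp
  rw [hK, x1, x2, hp2, ← hs,
    integral_radial (by omega) hdim μ x₀ hlam hs0 hm0 hm0 (by rw [hsm]; ring),
    integral_radial (by omega) hdim μ x₀ hlam hs0 (by linarith : 0 < m + 1)
      (by linarith : 0 < m - 1) (by rw [mul_add, hsm, hs]; ring),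
    beta_add_one_sub_one hm1, hball]
  obtain ⟨X, hX⟩ : ∃ X, X = n * omegaBall n / s * ProbabilityTheory.beta m m := ⟨_, rfl⟩
  have hX0 : 0 < X := by rw [hX]; positivity
  have hm10 : m - 1 ≠ 0 := by linarith
  rw [← hX]
  calc _ = (lam ^ (-m) * X) ^ (1 - 1 / m) := by rw [hX]; congr 1; ring
    _ = lam ^ (-(m - 1)) * X ^ (1 - 1 / m) := by
        rw [Real.mul_rpow (by positivity) hX0.le, ← Real.rpow_mul hlam.le]
        congr 2; field_simp
    _ = lam ^ (-(m - 1)) * (X ^ (-(1 / m)) * X) := by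
        rw [← Real.rpow_add_one hX0.ne']; congr 2; ring
    _ = (m - 1) / m * X ^ (-(1 / m)) * (m / (m - 1) * (lam ^ (-(m - 1)) * X)) := by
        field_simp
    _ = _ := by rw [hX]; ring
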